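/- Sampled simplifications give approximate medians for every large subset (clustering candidates, O((mℓ)^{1/p}) factor): let (X,ρ) be a metric space, let T be a set of n point sequences over X, each of complexity at most m, let β > 1, p ∈ [1,∞), δ ∈ (0,1), and 2 ≤ ℓ ≤ m. Fix a subset T' ⊆ T with |T'| ≥ |T|/β. Let S be a multiset of ⌈ 2β·log₂(2/δ) ⌉ point sequences sampled from T uniformly and independently at random with replacement, and let C be the set of fixed (2,ℓ)-simplifications under dtw_p of the sequences in S. Then with probability at least 1−δ, there exists τ' ∈ C such that cost_p^1(T', τ') ≤ 8 · m^{1/p} · ℓ^{1/p} · min_{c ∈ X^{≤ℓ}} cost_p^1(T', c). -/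

import Mathlib

open scoped BigOperators

/-- An `(m₁, m₂)`-warping (with 0-based indices): a sequence of index pairs starting at
`(0,0)`, ending at `(m₁-1, m₂-1)`, whose consecutive increments lie in
`{(0,1), (1,0), (1,1)}`. -/
def IsWarping (m₁ m₂ : ℕ) (W : List (ℕ × ℕ)) : Prop :=
  W ≠ [] ∧ W.head? = some (0, 0) ∧ W.getLast? = some (m₁ - 1, m₂ - 1) ∧
    ∀ k, k + 1 < W.length →
      W.getD (k + 1) (0, 0) = ((W.getD k (0, 0)).1, (W.getD k (0, 0)).2 + 1) ∨
      W.getD (k + 1) (0, 0) = ((W.getD k (0, 0)).1 + 1, (W.getD k (0, 0)).2) ∨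
      W.getD (k + 1) (0, 0) = ((W.getD k (0, 0)).1 + 1, (W.getD k (0, 0)).2 + 1)

/-- The cost `Σ_{(i,j) ∈ W} ρ(σ_i, τ_j)^p` of a warping `W`. -/
noncomputable def warpCost {X : Type*} [MetricSpace X] [Inhabited X]
    (p : ℝ) (σ τ : List X) (W : List (ℕ × ℕ)) : ℝ :=
  (W.map fun ij => dist (σ.getD ij.1 default) (τ.getD ij.2 default) ^ p).sum

/-- The `p`-dynamic time warping distance between two point sequences. -/
noncomputable def dtw {X : Type*} [MetricSpace X] [Inhabited X] (p : ℝ) (σ τ : List X) : ℝ :=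
  sInf { c : ℝ | ∃ W, IsWarping σ.length τ.length W ∧ c = warpCost p σ τ W ^ (1 / p) }

/-- `cost_p^q(T, c) = Σ_{τ ∈ T} dtw_p(c, τ)^q`. -/
noncomputable def dtwCost {X : Type*} [MetricSpace X] [Inhabited X]
    (p q : ℝ) (T : Finset (List X)) (c : List X) : ℝ :=
  ∑ τ ∈ T, dtw p c τ ^ q

/-- `σ` is a point sequence of complexity at most `ℓ`, i.e. `σ ∈ X^{≤ℓ}`. -/
def SeqLE {X : Type*} (ℓ : ℕ) (σ : List X) : Prop := 2 ≤ σ.length ∧ σ.length ≤ ℓ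

/-- Inductive version of warpings (built from the front, last pair is `(i, j)`). -/
inductive WPath : ℕ → ℕ → List (ℕ × ℕ) → Prop
  | base : WPath 0 0 [(0, 0)]
  | right {i j L} : WPath i j L → WPath i (j + 1) (L ++ [(i, j + 1)])
  | down {i j L} : WPath i j L → WPath (i + 1) j (L ++ [(i + 1, j)])
  | diag {i j L} : WPath i j L → WPath (i + 1) (j + 1) (L ++ [(i + 1, j + 1)])

theorem WPath.last_mem {i j L} (h : WPath i j L) : (i, j) ∈ L := by
  cases h <;> simp

theorem WPath.le {i j L} (h : WPath i j L) : ∀ x ∈ L, x.1 ≤ i ∧ x.2 ≤ j := by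
  induction h with
  | base => simp
  | right h ih | down h ih | diag h ih =>
    intro x hx
    rcases List.mem_append.1 hx with hx | hx
    · have := ih x hx; omega
    · simp only [List.mem_singleton] at hx; subst hx; simp

theorem WPath.nodup {i j L} (h : WPath i j L) : L.Nodup := by
  induction h with
  | base => simp
  | right h ih | down h ih | diag h ih =>
    refine List.nodup_append.2 ⟨ih, by simp, ?_⟩
    intro a ha b hb hab
    simp only [List.mem_singleton] at hb
    have := h.le a ha
    subst hab; subst hb
    simp at this

theorem WPath.swap {i j L} (h : WPath i j L) : WPath j i (L.map Prod.swap) := by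
  induction h with
  | base => exact WPath.base
  | right h ih => simpa using ih.down
  | down h ih => simpa using ih.right
  | diag h ih => simpa using ih.diag

theorem WPath.exists (i j : ℕ) : ∃ L, WPath i j L := by
  induction i with
  | zero =>
    induction j with
    | zero => exact ⟨_, .base⟩
    | succ j ih => obtain ⟨L, h⟩ := ih; exact ⟨_, h.right⟩
  | succ i ih => obtain ⟨L, h⟩ := ih; exact ⟨_, h.down⟩

def WComp (L₁ L₂ L : List (ℕ × ℕ)) : Prop :=
  ∀ x ∈ L, ∃ j, (x.1, j) ∈ L₁ ∧ (j, x.2) ∈ L₂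

theorem WComp.mono {L₁ L₂ L L₁' L₂'} (h : WComp L₁ L₂ L) (h1 : L₁ ⊆ L₁') (h2 : L₂ ⊆ L₂') :
    WComp L₁' L₂' L := fun x hx => by
  obtain ⟨j, a, b⟩ := h x hx
  exact ⟨j, h1 a, h2 b⟩

theorem WComp.snoc {L₁ L₂ L} {i j k : ℕ} (h : WComp L₁ L₂ L) (h1 : (i, j) ∈ L₁)
    (h2 : (j, k) ∈ L₂) : WComp L₁ L₂ (L ++ [(i, k)]) := by
  intro x hx
  rcases List.mem_append.1 hx with hx | hx
  · exact h x hx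
  · simp only [List.mem_singleton] at hx
    subst hx
    exact ⟨j, h1, h2⟩

theorem WPath.comp {i j L₁} (h1 : WPath i j L₁) : ∀ {k L₂}, WPath j k L₂ →
    ∃ L, WPath i k L ∧ WComp L₁ L₂ L := by
  induction h1 with
  | base =>
    intro k L₂ h2
    generalize hz : 0 = z at h2
    induction h2 with
    | base => exact ⟨_, .base, fun x hx => ⟨0, by simp at hx; subst hx; simp⟩⟩
    | right h ih =>
      obtain ⟨L, hL, hc⟩ := ih hz
      subst hz
      exact ⟨_, hL.right, (hc.mono (by simp) (by simp)).snoc (j := 0) (by simp) (by simp)⟩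
    | down h ih => omega
    | diag h ih => omega
  | @down i j L₁ h1 ih1 =>
    intro k L₂ h2
    obtain ⟨L, hL, hc⟩ := ih1 h2
    exact ⟨_, hL.down, (hc.mono (by simp) (by simp)).snoc (j := j) (by simp) h2.last_mem⟩
  | @right i j L₁ h1 ih1 =>
    intro k L₂ h2
    generalize hz : j + 1 = z at h2
    induction h2 with
    | base => omega
    | right h ih =>
      obtain ⟨L, hL, hc⟩ := ih hz
      subst hz
      exact ⟨_, hL.right, (hc.mono (by simp) (by simp)).snoc (j := j + 1) (by simp) (by simp)⟩
    | down h ih =>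
      obtain rfl := Nat.succ.inj hz
      obtain ⟨L, hL, hc⟩ := ih1 h
      exact ⟨_, hL, (hc.mono (by simp) (by simp))⟩
    | diag h ih =>
      obtain rfl := Nat.succ.inj hz
      obtain ⟨L, hL, hc⟩ := ih1 h
      exact ⟨_, hL.right, (hc.mono (by simp) (by simp)).snoc (j := j + 1) (by simp) (by simp)⟩
  | @diag i j L₁ h1 ih1 =>
    intro k L₂ h2
    generalize hz : j + 1 = z at h2
    induction h2 with
    | base => omega
    | right h ih =>
      obtain ⟨L, hL, hc⟩ := ih hz
      subst hz
      exact ⟨_, hL.right, (hc.mono (by simp) (by simp)).snoc (j := j + 1) (by simp) (by simp)⟩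
    | down h ih =>
      obtain rfl := Nat.succ.inj hz
      obtain ⟨L, hL, hc⟩ := ih1 h
      exact ⟨_, hL.down, (hc.mono (by simp) (by simp)).snoc (j := j + 1) (by simp) (by simp)⟩
    | diag h ih =>
      obtain rfl := Nat.succ.inj hz
      obtain ⟨L, hL, hc⟩ := ih1 h
      exact ⟨_, hL.diag, (hc.mono (by simp) (by simp)).snoc (j := j + 1) (by simp) (by simp)⟩

/-- Step condition of warpings. -/
def WSteps (W : List (ℕ × ℕ)) : Prop :=
  ∀ k, k + 1 < W.length →
      W.getD (k + 1) (0, 0) = ((W.getD k (0, 0)).1, (W.getD k (0, 0)).2 + 1) ∨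
      W.getD (k + 1) (0, 0) = ((W.getD k (0, 0)).1 + 1, (W.getD k (0, 0)).2) ∨
      W.getD (k + 1) (0, 0) = ((W.getD k (0, 0)).1 + 1, (W.getD k (0, 0)).2 + 1)

theorem WSteps.snoc {W : List (ℕ × ℕ)} {a b : ℕ × ℕ} (h : WSteps W) (hl : W.getLast? = some b)
    (hs : a = (b.1, b.2 + 1) ∨ a = (b.1 + 1, b.2) ∨ a = (b.1 + 1, b.2 + 1)) :
    WSteps (W ++ [a]) := by
  intro k hk
  simp only [List.length_append, List.length_singleton] at hk
  by_cases hk' : k + 1 < W.length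
  · rw [List.getD_append _ _ _ _ hk', List.getD_append _ _ _ _ (by omega)]
    exact h k hk'
  · have e : k + 1 = W.length := by omega
    have hb : W.getD k (0, 0) = b := by
      rw [List.getLast?_eq_getElem?] at hl
      rw [List.getD_eq_getElem?_getD, show k = W.length - 1 by omega, hl]; rfl
    rw [List.getD_append _ _ _ _ (by omega : k < W.length), hb, List.getD_append_right _ _ _ _ (by omega)]
    simpa [e] using hs

theorem wpath_isW {i j W} (h : WPath i j W) :
    W ≠ [] ∧ W.head? = some (0, 0) ∧ W.getLast? = some (i, j) ∧ WSteps W := by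
  induction h with
  | base => exact ⟨by simp, by simp, by simp, fun k hk => by simp at hk⟩
  | right h ih | down h ih | diag h ih =>
    obtain ⟨h1, h2, h3, h4⟩ := ih
    exact ⟨by simp, by simp [List.head?_append, h2], by simp, h4.snoc h3 (by simp)⟩

theorem isW_wpath (W : List (ℕ × ℕ)) : ∀ i j, 
    W.head? = some (0, 0) → W.getLast? = some (i, j) → WSteps W → WPath i j W := by
  induction W using List.reverseRecOn with
  | nil => intro i j h; simp at h
  | append_singleton W a ih =>
    intro i j h1 h2 h3
    simp only [List.getLast?_append, List.getLast?_singleton, Option.some_or, Option.some.injEq] at h2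
    subst h2
    rcases List.eq_nil_or_concat W with rfl | ⟨W', b, rfl⟩
    · simp at h1
      obtain ⟨rfl, rfl⟩ := h1
      exact .base
    · rw [List.concat_eq_append] at *
      have hs : WSteps (W' ++ [b]) := by
        intro k hk
        have := h3 k (by simp at hk ⊢; omega)
        rwa [List.getD_append (W' ++ [b]) _ _ _ hk, List.getD_append (W' ++ [b]) _ _ _ (by omega)] at this
      have hp := ih b.1 b.2 (by
        rw [List.head?_append] at h1
        rcases hh : (W' ++ [b]).head? with _ | c
        · simp at hh
        · rw [hh] at h1; simpa using h1) (by simp) hs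
      have := h3 W'.length (by simp)
      rw [List.getD_append_right _ _ _ _ (by simp), List.getD_append _ _ _ _ (by simp),
        List.getD_append_right _ _ _ _ (by simp)] at this
      simp at this
      rcases this with h | h | h <;> obtain ⟨rfl, rfl⟩ := h
      · exact hp.right
      · exact hp.down
      · exact hp.diag

theorem isWarping_iff {a b : ℕ} {W : List (ℕ × ℕ)} :
    IsWarping a b W ↔ WPath (a - 1) (b - 1) W :=
  ⟨fun h => isW_wpath W _ _ h.2.1 h.2.2.1 h.2.2.2, fun h => wpath_isW h⟩

section dtwsec
variable {X : Type*} [MetricSpace X] [Inhabited X]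

theorem warpCost_nonneg (p : ℝ) (σ τ : List X) (W : List (ℕ × ℕ)) : 0 ≤ warpCost p σ τ W := by
  unfold warpCost
  apply List.sum_nonneg
  intro x hx
  simp only [List.mem_map] at hx
  obtain ⟨a, _, rfl⟩ := hx
  exact Real.rpow_nonneg dist_nonneg _

theorem warpCost_finset (p : ℝ) (σ τ : List X) {W : List (ℕ × ℕ)} (h : W.Nodup) :
    warpCost p σ τ W = ∑ x ∈ W.toFinset,
      dist (σ.getD x.1 default) (τ.getD x.2 default) ^ p := by
  unfold warpCost
  rw [List.sum_toFinset _ h]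

theorem dtw_nonneg (p : ℝ) (σ τ : List X) : 0 ≤ dtw p σ τ := by
  apply Real.sInf_nonneg
  rintro x ⟨W, _, rfl⟩
  exact Real.rpow_nonneg (warpCost_nonneg _ _ _ _) _

theorem dtw_le (p : ℝ) (σ τ : List X) {W} (h : IsWarping σ.length τ.length W) :
    dtw p σ τ ≤ warpCost p σ τ W ^ (1 / p) := by
  apply csInf_le
  · refine ⟨0, ?_⟩
    rintro x ⟨W, _, rfl⟩
    exact Real.rpow_nonneg (warpCost_nonneg _ _ _ _) _
  · exact ⟨W, h, rfl⟩

theorem le_dtw (p : ℝ) (σ τ : List X) (x : ℝ)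
    (h : ∀ W, IsWarping σ.length τ.length W → x ≤ warpCost p σ τ W ^ (1 / p)) :
    x ≤ dtw p σ τ := by
  apply le_csInf
  · obtain ⟨W, hW⟩ := WPath.exists (σ.length - 1) (τ.length - 1)
    exact ⟨_, W, isWarping_iff.2 hW, rfl⟩
  · rintro _ ⟨W, hW, rfl⟩
    exact h W hW

theorem dtw_comm (p : ℝ) (σ τ : List X) : dtw p σ τ = dtw p τ σ := by
  have key : ∀ σ τ : List X, dtw p σ τ ≤ dtw p τ σ := by
    intro σ τ
    apply le_dtw
    intro W hW
    refine (dtw_le p σ τ (isWarping_iff.2 (isWarping_iff.1 hW).swap)).trans (le_of_eq ?_)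
    congr 1
    simp [warpCost, Function.comp_def, dist_comm]
  exact le_antisymm (key _ _) (key _ _)

theorem dtw_tri_aux (p : ℝ) (hp : 1 ≤ p) (σ τ υ : List X) (hσ : 1 ≤ σ.length)
    (hυ : 1 ≤ υ.length) {W₁ W₂} (h1 : IsWarping σ.length τ.length W₁)
    (h2 : IsWarping τ.length υ.length W₂) :
    dtw p σ υ ≤ (υ.length : ℝ) ^ (1 / p) * warpCost p σ τ W₁ ^ (1 / p) +
      (σ.length : ℝ) ^ (1 / p) * warpCost p τ υ W₂ ^ (1 / p) := by
  rw [isWarping_iff] at h1 h2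
  obtain ⟨W, hW, hc⟩ := h1.comp h2
  have hp0 : 0 < p := by linarith
  refine (dtw_le p σ υ (isWarping_iff.2 hW)).trans ?_
  have hc' : ∀ x, ∃ j, x ∈ W → (x.1, j) ∈ W₁ ∧ (j, x.2) ∈ W₂ := by
    intro x
    by_cases hx : x ∈ W
    · obtain ⟨j, hj⟩ := hc x hx
      exact ⟨j, fun _ => hj⟩
    · exact ⟨0, fun h => absurd h hx⟩
  choose J hJ using hc'
  set F : ℕ × ℕ → ℝ := fun x => dist (σ.getD x.1 default) (τ.getD x.2 default) with hF
  set G : ℕ × ℕ → ℝ := fun x => dist (τ.getD x.1 default) (υ.getD x.2 default) with hG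
  have hF0 : ∀ x, 0 ≤ F x := fun x => dist_nonneg
  have hG0 : ∀ x, 0 ≤ G x := fun x => dist_nonneg
  have e1 : ∑ x ∈ W.toFinset, F (x.1, J x) ^ p ≤ υ.length * warpCost p σ τ W₁ := by
    rw [warpCost_finset p σ τ h1.nodup]
    calc ∑ x ∈ W.toFinset, F (x.1, J x) ^ p
        = ∑ y ∈ W.toFinset.image (fun x => ((x.1, J x), x.2)), F y.1 ^ p := by
          rw [Finset.sum_image]
          intro x _ y _ hxy
          simp only [Prod.mk.injEq] at hxy
          exact Prod.ext hxy.1.1 hxy.2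
      _ ≤ ∑ y ∈ W₁.toFinset ×ˢ Finset.range υ.length, F y.1 ^ p := by
          apply Finset.sum_le_sum_of_subset_of_nonneg
          · intro y hy
            simp only [Finset.mem_image, List.mem_toFinset] at hy
            obtain ⟨x, hx, rfl⟩ := hy
            have := hW.le x hx
            simp only [Finset.mem_product, List.mem_toFinset, Finset.mem_range]
            exact ⟨(hJ x hx).1, by omega⟩
          · intro y _ _
            exact Real.rpow_nonneg (hF0 _) _
      _ = _ := by
          rw [Finset.sum_product]
          simp [Finset.mul_sum, hF]
  have e2 : ∑ x ∈ W.toFinset, G (J x, x.2) ^ p ≤ σ.length * warpCost p τ υ W₂ := by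
    rw [warpCost_finset p τ υ h2.nodup]
    calc ∑ x ∈ W.toFinset, G (J x, x.2) ^ p
        = ∑ y ∈ W.toFinset.image (fun x => ((J x, x.2), x.1)), G y.1 ^ p := by
          rw [Finset.sum_image]
          intro x _ y _ hxy
          simp only [Prod.mk.injEq] at hxy
          exact Prod.ext hxy.2 hxy.1.2
      _ ≤ ∑ y ∈ W₂.toFinset ×ˢ Finset.range σ.length, G y.1 ^ p := by
          apply Finset.sum_le_sum_of_subset_of_nonneg
          · intro y hy
            simp only [Finset.mem_image, List.mem_toFinset] at hy
            obtain ⟨x, hx, rfl⟩ := hy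
            have := hW.le x hx
            simp only [Finset.mem_product, List.mem_toFinset, Finset.mem_range]
            exact ⟨(hJ x hx).2, by omega⟩
          · intro y _ _
            exact Real.rpow_nonneg (hG0 _) _
      _ = _ := by
          rw [Finset.sum_product]
          simp [Finset.mul_sum, hG]
  have hinv : 0 ≤ 1 / p := by positivity
  calc warpCost p σ υ W ^ (1 / p)
      ≤ (∑ x ∈ W.toFinset, (F (x.1, J x) + G (J x, x.2)) ^ p) ^ (1 / p) := by
        apply Real.rpow_le_rpow (warpCost_nonneg _ _ _ _) _ hinv
        rw [warpCost_finset p σ υ hW.nodup]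
        apply Finset.sum_le_sum
        intro x _
        exact Real.rpow_le_rpow dist_nonneg (dist_triangle _ _ _) hp0.le
    _ ≤ (∑ x ∈ W.toFinset, F (x.1, J x) ^ p) ^ (1 / p) +
        (∑ x ∈ W.toFinset, G (J x, x.2) ^ p) ^ (1 / p) :=
        Real.Lp_add_le_of_nonneg _ hp (fun x _ => hF0 _) (fun x _ => hG0 _)
    _ ≤ _ := by
        rw [← Real.mul_rpow (by positivity) (warpCost_nonneg _ _ _ _),
          ← Real.mul_rpow (by positivity) (warpCost_nonneg _ _ _ _)]
        apply add_le_add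
        · exact Real.rpow_le_rpow
            (Finset.sum_nonneg fun x _ => Real.rpow_nonneg (hF0 _) _) e1 hinv
        · exact Real.rpow_le_rpow
            (Finset.sum_nonneg fun x _ => Real.rpow_nonneg (hG0 _) _) e2 hinv

theorem dtw_tri (p : ℝ) (hp : 1 ≤ p) (σ τ υ : List X) (hσ : 1 ≤ σ.length)
    (hυ : 1 ≤ υ.length) :
    dtw p σ υ ≤ (υ.length : ℝ) ^ (1 / p) * dtw p σ τ + (σ.length : ℝ) ^ (1 / p) * dtw p τ υ := by
  have ha : 0 < (υ.length : ℝ) ^ (1 / p) := Real.rpow_pos_of_pos (by exact_mod_cast hυ) _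
  have hb : 0 < (σ.length : ℝ) ^ (1 / p) := Real.rpow_pos_of_pos (by exact_mod_cast hσ) _
  set a := (υ.length : ℝ) ^ (1 / p)
  set b := (σ.length : ℝ) ^ (1 / p)
  have h1 : ∀ W₁, IsWarping σ.length τ.length W₁ →
      (dtw p σ υ - a * warpCost p σ τ W₁ ^ (1 / p)) / b ≤ dtw p τ υ := by
    intro W₁ hW₁
    apply le_dtw
    intro W₂ hW₂
    rw [div_le_iff₀ hb]
    have := dtw_tri_aux p hp σ τ υ hσ hυ hW₁ hW₂
    linarith
  have h2 : (dtw p σ υ - b * dtw p τ υ) / a ≤ dtw p σ τ := by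
    apply le_dtw
    intro W₁ hW₁
    have := h1 W₁ hW₁
    rw [div_le_iff₀ hb] at this
    rw [div_le_iff₀ ha]
    linarith
  rw [div_le_iff₀ ha] at h2
  linarith

theorem dtwCost_one (p : ℝ) (T : Finset (List X)) (c : List X) :
    dtwCost p 1 T c = ∑ τ ∈ T, dtw p c τ := by simp [dtwCost]

/-- Deterministic approximation bound. -/
theorem simp_cost_le (p : ℝ) (hp : 1 ≤ p) (m ℓ : ℕ) (hℓm : ℓ ≤ m) (T' : Finset (List X))
    (hm : ∀ τ ∈ T', 2 ≤ τ.length ∧ τ.length ≤ m) (τ s c : List X) (hs : SeqLE ℓ s)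
    (hc : SeqLE ℓ c) (hτs : dtw p τ s ≤ 2 * dtw p τ c)
    (hmk : (T'.card : ℝ) * dtw p c τ ≤ 2 * dtwCost p 1 T' c) :
    dtwCost p 1 T' s ≤ 8 * (m : ℝ) ^ (1 / p) * (ℓ : ℝ) ^ (1 / p) * dtwCost p 1 T' c := by
  have hinv : 0 ≤ 1 / p := by positivity
  have h2ℓ : 2 ≤ ℓ := hs.1.trans hs.2
  set M := (m : ℝ) ^ (1 / p) with hM
  set K := (ℓ : ℝ) ^ (1 / p) with hK
  have hM1 : 1 ≤ M := Real.one_le_rpow (by exact_mod_cast (by omega : 1 ≤ m)) hinv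
  have hK1 : 1 ≤ K := Real.one_le_rpow (by exact_mod_cast (by omega : 1 ≤ ℓ)) hinv
  have up : ∀ a b : ℕ, a ≤ b → (a : ℝ) ^ (1 / p) ≤ (b : ℝ) ^ (1 / p) := fun a b h =>
    Real.rpow_le_rpow (by positivity) (by exact_mod_cast h) hinv
  have hsc : dtw p s c ≤ 3 * K * dtw p c τ := by
    have h := dtw_tri p hp s τ c (by have := hs.1; omega) (by have := hc.1; omega)
    have h3 := mul_le_mul_of_nonneg_right (up _ _ hc.2) (dtw_nonneg p s τ)
    have h4 := mul_le_mul_of_nonneg_right (up _ _ hs.2) (dtw_nonneg p τ c)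
    rw [dtw_comm p s τ] at h h3
    have h5 := mul_le_mul_of_nonneg_left hτs (by linarith : 0 ≤ K)
    rw [dtw_comm p c τ]
    linarith
  have hone : ∀ τ' ∈ T', dtw p s τ' ≤ 3 * M * K * dtw p c τ + K * dtw p c τ' := by
    intro τ' hτ'
    have h := dtw_tri p hp s c τ' (by have := hs.1; omega) (by have := (hm _ hτ').1; omega)
    have h3 := mul_le_mul_of_nonneg_right (up _ _ (hm _ hτ').2) (dtw_nonneg p s c)
    have h4 := mul_le_mul_of_nonneg_right (up _ _ hs.2) (dtw_nonneg p c τ')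
    have h5 := mul_le_mul_of_nonneg_left hsc (by linarith : 0 ≤ M)
    linarith
  have hsum := Finset.sum_le_sum hone
  rw [Finset.sum_add_distrib, ← Finset.mul_sum, ← Finset.mul_sum, Finset.sum_const, nsmul_eq_mul,
    ← dtwCost_one, ← dtwCost_one] at hsum
  have hcost : 0 ≤ dtwCost p 1 T' c := by
    rw [dtwCost_one]; exact Finset.sum_nonneg fun _ _ => dtw_nonneg _ _ _
  have h6 := mul_le_mul_of_nonneg_left hmk (by positivity : 0 ≤ 3 * M * K)
  have h7 : K * dtwCost p 1 T' c ≤ M * K * dtwCost p 1 T' c := by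
    apply mul_le_mul_of_nonneg_right _ hcost
    nlinarith
  have h8 : 0 ≤ M * K * dtwCost p 1 T' c := by positivity
  nlinarith
end dtwsec

theorem markov_half {α : Type*} (T : Finset α) (f : α → ℝ) (hf : ∀ x, 0 ≤ f x) :
    (T.card : ℝ) / 2 ≤ ((T.filter fun x => (T.card : ℝ) * f x ≤ 2 * ∑ y ∈ T, f y).card : ℝ) := by
  classical
  by_contra hcon
  push Not at hcon
  set S := ∑ y ∈ T, f y with hS
  have hsplit := Finset.card_filter_add_card_filter_not (s := T)
    (fun x => (T.card : ℝ) * f x ≤ 2 * S)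
  set G := T.filter fun x => (T.card : ℝ) * f x ≤ 2 * S with hG
  set B := T.filter fun x => ¬ ((T.card : ℝ) * f x ≤ 2 * S) with hB
  have hsplit' : (G.card : ℝ) + B.card = T.card := by exact_mod_cast hsplit
  have hT0 : (0 : ℝ) ≤ T.card := by positivity
  have hG0 : (0 : ℝ) ≤ G.card := by positivity
  have hBpos : (T.card : ℝ) / 2 < B.card := by linarith
  have hTpos : (0 : ℝ) < T.card := by linarith
  have hS0 : 0 ≤ S := Finset.sum_nonneg fun x _ => hf x
  have hBne : B.Nonempty := by
    rw [← Finset.card_pos]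
    have : (0 : ℝ) < B.card := by linarith
    exact_mod_cast this
  have h1 : ∑ x ∈ B, 2 * S < ∑ x ∈ B, (T.card : ℝ) * f x :=
    Finset.sum_lt_sum_of_nonempty hBne fun x hx => by
      have := (Finset.mem_filter.1 hx).2
      linarith
  rw [Finset.sum_const, nsmul_eq_mul, ← Finset.mul_sum] at h1
  have h2 : ∑ x ∈ B, f x ≤ S :=
    Finset.sum_le_sum_of_subset_of_nonneg (Finset.filter_subset _ _) fun x _ _ => hf x
  nlinarith [mul_le_mul_of_nonneg_left h2 hT0]

/-- A chain of threshold sets, all large, has a large intersection. -/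
theorem threshold_inter {α ι : Type*} (T : Finset α) (g : α → ℝ) (C : ι → Prop) (v : ι → ℝ)
    (hC : ∃ c, C c) (N : ℝ)
    (h : ∀ c, C c → N ≤ ((T.filter fun x => g x ≤ v c).card : ℝ)) :
    ∃ G ⊆ T, N ≤ (G.card : ℝ) ∧ ∀ x ∈ G, ∀ c, C c → g x ≤ v c := by
  classical
  obtain ⟨c0, hc0⟩ := hC
  let S : ι → Finset α := fun c => T.filter fun x => g x ≤ v c
  have hex : ∃ k, ∃ c, C c ∧ (S c).card = k := ⟨_, c0, hc0, rfl⟩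
  obtain ⟨c, hc, hk⟩ := Nat.find_spec hex
  refine ⟨S c, Finset.filter_subset _ _, h c hc, ?_⟩
  intro x hx d hd
  have hmin : (S c).card ≤ (S d).card := by
    rw [hk]; exact Nat.find_min' hex ⟨d, hd, rfl⟩
  rcases le_total (v c) (v d) with hle | hle
  · exact (Finset.mem_filter.1 hx).2.trans hle
  · have hsub : S d ⊆ S c := by
      intro y hy
      have := Finset.mem_filter.1 hy
      exact Finset.mem_filter.2 ⟨this.1, this.2.trans hle⟩
    have := Finset.eq_of_subset_of_card_le hsub hmin
    rw [← this] at hx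
    exact (Finset.mem_filter.1 hx).2

theorem card_hit {α : Type*} [Fintype α] (P : α → Prop) (N : ℕ) :
    (Nat.card {s : Fin N → α | ∃ i, P (s i)} : ℝ) =
      (Fintype.card α : ℝ) ^ N - (Nat.card {a // ¬ P a} : ℝ) ^ N := by
  classical
  have h := Fintype.card_subtype_compl (fun s : Fin N → α => ∃ i, P (s i))
  have e : {s : Fin N → α // ¬ ∃ i, P (s i)} ≃ (Fin N → {a // ¬ P a}) :=
    (Equiv.subtypeEquivRight (by simp)).trans
      (Equiv.subtypePiEquivPi (p := fun (_ : Fin N) a => ¬ P a))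
  have hle := Fintype.card_subtype_le (fun s : Fin N → α => ∃ i, P (s i))
  rw [Fintype.card_congr e] at h
  simp only [Fintype.card_fun, Fintype.card_fin] at h hle
  have h' : Fintype.card {a // ¬ P a} ^ N + Fintype.card {s : Fin N → α // ∃ i, P (s i)}
      = Fintype.card α ^ N := by omega
  have h'' : (Fintype.card {a // ¬ P a} : ℝ) ^ N
      + Fintype.card {s : Fin N → α // ∃ i, P (s i)} = (Fintype.card α : ℝ) ^ N := by
    exact_mod_cast h'
  rw [← h'', Nat.card_eq_fintype_card, Nat.card_eq_fintype_card]
  simp only [Set.coe_ofPred]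
  ring

theorem pow_bound (β δ : ℝ) (hβ : 1 < β) (hδ0 : 0 < δ) (hδ1 : δ < 1) :
    (1 - 1 / (2 * β)) ^ ⌈2 * β * Real.logb 2 (2 / δ)⌉₊ ≤ δ := by
  set N := ⌈2 * β * Real.logb 2 (2 / δ)⌉₊
  have hN : 2 * β * Real.logb 2 (2 / δ) ≤ N := Nat.le_ceil _
  have hx : 1 / (2 * β) ≤ 1 := by rw [div_le_one (by linarith)]; linarith
  have h2 : 1 ≤ 2 / δ := by rw [le_div_iff₀ hδ0]; linarith
  have hlog : Real.log (2 / δ) ≤ Real.logb 2 (2 / δ) := by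
    unfold Real.logb
    rw [le_div_iff₀ (Real.log_pos (by norm_num))]
    have := Real.log_nonneg h2
    have := Real.log_two_lt_d9
    nlinarith
  have hmul : Real.log (2 / δ) ≤ N * (1 / (2 * β)) := by
    rw [mul_one_div, le_div_iff₀ (by linarith)]
    nlinarith
  calc (1 - 1 / (2 * β)) ^ N ≤ (Real.exp (-(1 / (2 * β)))) ^ N :=
        pow_le_pow_left₀ (by linarith) (Real.one_sub_le_exp_neg _) _
    _ = Real.exp (-(N * (1 / (2 * β)))) := by rw [← Real.exp_nat_mul]; ring_nf
    _ ≤ Real.exp (-Real.log (2 / δ)) := Real.exp_le_exp.2 (by linarith)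
    _ = δ / 2 := by rw [Real.exp_neg, Real.exp_log (by linarith)]; simp
    _ ≤ δ := by linarith

/-- **Sampled simplifications give approximate medians for every large subset**
(Lemma `lemma:kmedians_roughapprox`, clustering candidates with `O((mℓ)^{1/p})` factor):
for a fixed `T' ⊆ T` with `|T'| ≥ |T|/β`, sampling `⌈2β·log₂(2/δ)⌉` sequences from `T`
uniformly and independently with replacement and taking their fixed `(2,ℓ)`-simplifications,
with probability at least `1-δ` some sampled sequence `τ` has
`cost_p^1(T', τ') ≤ 8 m^{1/p} ℓ^{1/p} · min_{c ∈ X^{≤ℓ}} cost_p^1(T',c)`, where `τ'` is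
its simplification. -/
theorem clustering_candidates_median_factor {X : Type*} [MetricSpace X] [Inhabited X]
    (T : Finset (List X)) (hT : T.Nonempty) (n m ℓ : ℕ) (hn : T.card = n)
    (hm : ∀ τ ∈ T, 2 ≤ τ.length ∧ τ.length ≤ m)
    (hℓ2 : 2 ≤ ℓ) (hℓm : ℓ ≤ m)
    (β : ℝ) (hβ : 1 < β) (p : ℝ) (hp : 1 ≤ p) (δ : ℝ) (hδ0 : 0 < δ) (hδ1 : δ < 1)
    (simp : List X → List X)
    (hsimp : ∀ τ ∈ T, SeqLE ℓ (simp τ) ∧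
      ∀ π' : List X, SeqLE ℓ π' → dtw p τ (simp τ) ≤ 2 * dtw p τ π')
    (T' : Finset (List X)) (hT'sub : T' ⊆ T) (hT'card : (T.card : ℝ) / β ≤ (T'.card : ℝ)) :
    (1 - δ) *
        (Fintype.card
          (Fin ⌈2 * β * Real.logb 2 (2 / δ)⌉₊ → {τ // τ ∈ T}) : ℝ) ≤
      (Nat.card
        {s : Fin ⌈2 * β * Real.logb 2 (2 / δ)⌉₊ → {τ // τ ∈ T} |
          ∃ i, ∀ c : List X, SeqLE ℓ c →
            dtwCost p 1 T' (simp ((s i : List X))) ≤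
              8 * (m : ℝ) ^ (1 / p) * (ℓ : ℝ) ^ (1 / p) * dtwCost p 1 T' c} : ℝ) := by
  classical
  set N := ⌈2 * β * Real.logb 2 (2 / δ)⌉₊ with hN
  have hbound := pow_bound β δ hβ hδ0 hδ1
  rw [← hN] at hbound
  -- the good samples
  obtain ⟨G, hGT, hGcard, hG⟩ := threshold_inter T' (fun τ => dtwCost p 1 T' (simp τ))
    (fun c => SeqLE ℓ c)
    (fun c => 8 * (m : ℝ) ^ (1 / p) * (ℓ : ℝ) ^ (1 / p) * dtwCost p 1 T' c)
    ⟨List.replicate 2 default, by simp [SeqLE, hℓ2]⟩ ((T'.card : ℝ) / 2) (by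
      intro c hc
      refine (markov_half T' (fun τ => dtw p c τ) (fun _ => dtw_nonneg _ _ _)).trans ?_
      have : (T'.filter fun x => (T'.card : ℝ) * dtw p c x ≤ 2 * ∑ y ∈ T', dtw p c y) ⊆
          T'.filter fun τ => dtwCost p 1 T' (simp τ) ≤
            8 * (m : ℝ) ^ (1 / p) * (ℓ : ℝ) ^ (1 / p) * dtwCost p 1 T' c := by
        intro τ hτ
        obtain ⟨h1, h2⟩ := Finset.mem_filter.1 hτ
        rw [← dtwCost_one] at h2
        obtain ⟨h3, h4⟩ := hsimp τ (hT'sub h1)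
        exact Finset.mem_filter.2 ⟨h1, simp_cost_le p hp m ℓ hℓm T'
          (fun τ' h => hm τ' (hT'sub h)) τ (simp τ) c h3 hc (h4 c hc) h2⟩
      exact_mod_cast Finset.card_le_card this)
  rw [card_hit (fun τ : {τ // τ ∈ T} => ∀ c : List X, SeqLE ℓ c →
    dtwCost p 1 T' (simp (τ : List X)) ≤
      8 * (m : ℝ) ^ (1 / p) * (ℓ : ℝ) ^ (1 / p) * dtwCost p 1 T' c) N]
  set P : {τ // τ ∈ T} → Prop := fun τ => ∀ c : List X, SeqLE ℓ c →
    dtwCost p 1 T' (simp (τ : List X)) ≤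
      8 * (m : ℝ) ^ (1 / p) * (ℓ : ℝ) ^ (1 / p) * dtwCost p 1 T' c with hP
  have hbad : Nat.card {a // ¬ P a} + G.card ≤ T.card := by
    have h1 : Nat.card {a // ¬ P a} ≤ (T \ G).card := by
      rw [Nat.card_eq_fintype_card, ← Fintype.card_coe]
      refine Fintype.card_le_of_injective
        (fun a : {a // ¬ P a} => (⟨a.1.1, Finset.mem_sdiff.2 ⟨a.1.2, fun hg =>
          a.2 (hG _ hg)⟩⟩ : {x // x ∈ T \ G})) ?_
      intro a b hab
      have hab' : (a.1.1 : List X) = b.1.1 := Subtype.mk.inj hab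
      exact Subtype.ext (Subtype.ext hab')
    rw [Finset.card_sdiff_of_subset (hGT.trans hT'sub)] at h1
    have := Finset.card_le_card (hGT.trans hT'sub)
    omega
  have hTc : (0 : ℝ) ≤ T.card := by positivity
  have hbad' : (Nat.card {a // ¬ P a} : ℝ) ≤ (1 - 1 / (2 * β)) * T.card := by
    have : (Nat.card {a // ¬ P a} : ℝ) + G.card ≤ T.card := by exact_mod_cast hbad
    have e : (1 - 1 / (2 * β)) * T.card = T.card - T.card / β / 2 := by
      field_simp
    rw [e]
    linarith
  have hpow : (Nat.card {a // ¬ P a} : ℝ) ^ N ≤ δ * (T.card : ℝ) ^ N := by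
    calc _ ≤ ((1 - 1 / (2 * β)) * T.card) ^ N := pow_le_pow_left₀ (by positivity) hbad' _
      _ = (1 - 1 / (2 * β)) ^ N * (T.card : ℝ) ^ N := mul_pow _ _ _
      _ ≤ _ := mul_le_mul_of_nonneg_right hbound (by positivity)
  have hcardT : Fintype.card {τ // τ ∈ T} = T.card := Fintype.card_coe T
  rw [Fintype.card_fun, hcardT, Fintype.card_fin]
  push_cast
  linarith
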